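/- Let k ≥ 3 and let G be a bipartite egr(n,k,g,λ) graph with g ≡ 0 (mod 4). Suppose c₁ and c are natural numbers such that for every vertex v of G the number of closed walks of length g/2 based at v equals c₁ and the number of cycle-free closed walks of length g based at v equals c. Then n·(c + kλ − c₁²) ≥ 2·(c + kλ + k^g − 2·c₁·k^{g/2}). -/

import Mathlib

/-!
Fix a vertex `v` and put `m = g / 2`, which is even; let `A` be the adjacency matrix of `G`.

Let `P` be the colour class of `v`. By regularity `P` has `n / 2` elements, and since `m` is even
the row of `v` in `A ^ m` is supported on `P`. The entries of this row sum to `k ^ m`, its diagonal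
entry is `c₁`, and its squares sum to `X`, the number of closed walks of length `g` at `v`. The
Cauchy-Schwarz inequality on the `n / 2 - 1` entries indexed by `P \ {v}` gives
`(k ^ m - c₁) ^ 2 ≤ (n / 2 - 1) * (X - c₁ ^ 2)`, which is the claimed bound with `X` in place
of `c + k * lam`.

It remains to bound `X` by `c + k * lam` (the coefficient `n - 2` of `X` is nonnegative). A closed
walk of length `g` whose edges contain a cycle is itself a cycle, because that cycle has length at
least `g` (`isCycle_of_not_isAcyclic`). Each such cycle uses two edges at `v`, so double counting
pairs (edge at `v`, cycle through it) shows that there are at most `k * lam` of them, counted with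
orientation (`card_cycles_le`).
-/


open SimpleGraph

/-- `G` is an edge-girth-regular graph with parameters `(n, k, g, lam)`:
a finite simple graph on `n` vertices, `k`-regular, of girth `g`, in which every
edge lies on exactly `lam` cycles of length `g` (each such cycle corresponds to
exactly two closed walks based at an endpoint of the edge and traversing it). -/
def SimpleGraph.IsEGR {V : Type*} (G : SimpleGraph V) (n k g lam : ℕ) : Prop :=
  Finite V ∧ Nat.card V = n ∧
    (∀ v : V, (G.neighborSet v).ncard = k) ∧
    G.egirth = (g : ℕ∞) ∧
    ∀ u v : V, G.Adj u v →
      Nat.card {p : G.Walk u u // p.IsCycle ∧ p.length = g ∧ s(u, v) ∈ p.edges} = 2 * lam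

/-- The number of closed walks of length `l` based at `v`. -/
noncomputable def SimpleGraph.closedWalkCount {V : Type*} (G : SimpleGraph V) (v : V) (l : ℕ) : ℕ :=
  Nat.card {p : G.Walk v v // p.length = l}

/-- The number of cycle-free closed walks of length `l` based at `v`,
i.e. closed walks whose traversed edges form an acyclic subgraph. -/
noncomputable def SimpleGraph.cycleFreeClosedWalkCount {V : Type*} (G : SimpleGraph V) (v : V)
    (l : ℕ) : ℕ :=
  Nat.card {p : G.Walk v v // p.length = l ∧ p.toSubgraph.coe.IsAcyclic}

/-- A closed walk whose length does not exceed the girth and whose edges contain a cycle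
is itself a cycle. -/
lemma isCycle_of_not_isAcyclic {V : Type*} {G : SimpleGraph V} {v : V} (p : G.Walk v v)
    (hlen : (p.length : ℕ∞) ≤ G.egirth) (hp : ¬ p.toSubgraph.coe.IsAcyclic) : p.IsCycle := by
  classical
  simp only [IsAcyclic, not_forall, not_not] at hp
  obtain ⟨a, w', hw'⟩ := hp
  obtain ⟨b, w, hw, hsup, hedge⟩ : ∃ b, ∃ w : G.Walk b b,
      w.IsCycle ∧ w.support ⊆ p.support ∧ w.edges ⊆ p.edges := by
    refine ⟨_, w'.map p.toSubgraph.hom, hw'.map Subgraph.hom_injective, fun x hx => ?_,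
      fun e he => ?_⟩
    · rw [Walk.support_map, List.mem_map] at hx
      obtain ⟨y, -, rfl⟩ := hx
      exact p.mem_verts_toSubgraph.1 y.2
    · rw [Walk.edges_map, List.mem_map] at he
      obtain ⟨y, hy, rfl⟩ := he
      have hy' := w'.edges_subset_edgeSet hy
      induction y with
      | _ x z =>
        rw [← Walk.mem_edges_toSubgraph]
        exact hy'
  have hle : p.length ≤ w.length := by
    exact_mod_cast hlen.trans (egirth_le_length hw)
  have hnil : p ≠ Walk.nil := by
    rintro rfl
    have h3 := hw.three_le_length
    have h4 := (hw.edges_nodup.subperm hedge).length_le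
    rw [Walk.length_edges, Walk.length_edges, Walk.length_nil] at h4
    omega
  have hstart : v ∈ p.support.tail := Walk.end_mem_tail_support (by
    rwa [← Walk.eq_nil_iff_nil])
  -- The edges (resp. vertices) of `w` are distinct entries of the corresponding list for `p`,
  -- and the latter is not longer, so the two lists are permutations of each other.
  have hE : w.edges.Perm p.edges :=
    (hw.edges_nodup.subperm hedge).perm_of_length_le (by simpa using hle)
  have hS : w.support.tail.Perm p.support.tail := by
    refine (hw.support_nodup.subperm ?_).perm_of_length_le (by simpa using hle)
    intro x hx
    rcases (p.mem_support_iff).1 (hsup (List.mem_of_mem_tail hx)) with rfl | h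
    · exact hstart
    · exact h
  exact ⟨⟨⟨hE.nodup_iff.1 hw.edges_nodup⟩, hnil⟩, hS.nodup_iff.1 hw.support_nodup⟩

/-- If each edge at `v` lies on `2 * lam` oriented `g`-cycles based at `v`, then there are at most
`k * lam` oriented `g`-cycles based at `v`, as each of them uses two distinct edges at `v`. -/
lemma card_cycles_le {V : Type*} [Fintype V] [DecidableEq V] (G : SimpleGraph V)
    [DecidableRel G.Adj] [∀ v : V, DecidablePred fun p : G.Walk v v => p.IsCycle]
    (v : V) (k g lam : ℕ) (hk : G.degree v = k)
    (h : ∀ u, G.Adj v u →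
      Nat.card {p : G.Walk v v // p.IsCycle ∧ p.length = g ∧ s(v, u) ∈ p.edges} = 2 * lam) :
    ((G.finsetWalkLength g v v).filter fun p => p.IsCycle).card ≤ k * lam := by
  set C := (G.finsetWalkLength g v v).filter fun p => p.IsCycle with hC
  have h1 : ∀ u ∈ G.neighborFinset v, (C.filter fun p => s(v, u) ∈ p.edges).card = 2 * lam := by
    intro u hu
    rw [← h u (by simpa using hu)]
    refine (Nat.subtype_card _ fun p => ?_).symm
    simp only [hC, Finset.mem_filter, mem_finsetWalkLength_iff]
    tauto
  have h2 : ∀ p ∈ C, 2 ≤ ((G.neighborFinset v).filter fun u => s(v, u) ∈ p.edges).card := by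
    intro p hp
    have hcyc : p.IsCycle := (Finset.mem_filter.1 hp).2
    rw [← Finset.card_pair hcyc.snd_ne_penultimate]
    apply Finset.card_le_card
    have a1 := Walk.mk_start_snd_mem_edges hcyc.not_nil
    have a2 := Walk.mk_penultimate_end_mem_edges hcyc.not_nil
    rw [Sym2.eq_swap] at a2
    intro u hu
    rw [Finset.mem_insert, Finset.mem_singleton] at hu
    rw [Finset.mem_filter, mem_neighborFinset]
    rcases hu with rfl | rfl
    · exact ⟨p.adj_of_mem_edges a1, a1⟩
    · exact ⟨p.adj_of_mem_edges a2, a2⟩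
  have h3 := Finset.sum_card_bipartiteAbove_eq_sum_card_bipartiteBelow
    (s := C) (t := G.neighborFinset v) (fun p u => s(v, u) ∈ p.edges)
  have h4 := Finset.sum_le_sum h2
  have h5 := Finset.sum_congr rfl h1
  simp only [Finset.bipartiteAbove, Finset.bipartiteBelow] at h3
  rw [h3, h5] at h4
  simp only [Finset.sum_const, smul_eq_mul, card_neighborFinset_eq_degree, hk] at h4
  nlinarith

/-- In a regular graph of positive degree with a proper 2-colouring, each colour class contains
half of the vertices. -/
lemma two_mul_card_colorClass {V : Type*} [Fintype V] (G : SimpleGraph V)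
    [DecidableRel G.Adj] (k : ℕ) (hk : 0 < k) (hreg : ∀ v, G.degree v = k)
    (col : G.Coloring Bool) (b : Bool) :
    2 * (Finset.univ.filter fun u => col u = b).card = Fintype.card V := by
  classical
  have hb : G.IsBipartiteWith (Finset.univ.filter fun u => col u = b : Finset V)
      (Finset.univ.filter fun u => ¬ col u = b : Finset V) := by
    constructor
    · rw [Finset.disjoint_coe]
      exact Finset.disjoint_filter_filter_not _ _ _
    · intro x y hxy
      have := col.valid hxy
      simp only [Finset.coe_filter, Finset.mem_univ, true_and, Set.mem_ofPred_eq]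
      revert this
      cases col x <;> cases col y <;> cases b <;> simp
  have h1 := isBipartiteWith_sum_degrees_eq hb
  simp only [hreg, Finset.sum_const, smul_eq_mul] at h1
  have h2 := Nat.eq_of_mul_eq_mul_right hk h1
  have h3 := Finset.card_filter_add_card_filter_not (s := (Finset.univ : Finset V))
    (fun u => col u = b)
  rw [Finset.card_univ] at h3
  omega

/-- In a regular graph the rows of the `m`-th power of the adjacency matrix sum to `k ^ m`. -/
lemma sum_adjMatrix_pow {V : Type*} [Fintype V] [DecidableEq V] (G : SimpleGraph V)
    [DecidableRel G.Adj] (k m : ℕ) (hreg : ∀ v, G.degree v = k) (v : V) :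
    ∑ u, (G.adjMatrix ℤ ^ m) v u = (k : ℤ) ^ m := by
  induction m generalizing v with
  | zero => simp [Matrix.one_apply]
  | succ m ih =>
    simp only [pow_succ', adjMatrix_mul_apply]
    rw [Finset.sum_comm]
    simp [ih, hreg]

/-- Let `k ≥ 3` and let `G` be a bipartite `egr(n, k, g, λ)` graph with `g ≡ 0 (mod 4)`.
If every vertex of `G` lies on exactly `c₁` closed walks of length `g/2` and on
exactly `c` cycle-free closed walks of length `g`, then
`n(c + kλ - c₁²) ≥ 2(c + kλ + k^g - 2c₁k^(g/2))`. -/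
theorem bipartite_egr_even_girth_0mod4_lower_bound (n k g lam c₁ c : ℕ) (hk : 3 ≤ k)
    (hg : g % 4 = 0) {V : Type*} (G : SimpleGraph V) (hbip : G.Colorable 2)
    (h : G.IsEGR n k g lam)
    (hc₁ : ∀ v : V, G.closedWalkCount v (g / 2) = c₁)
    (hc : ∀ v : V, G.cycleFreeClosedWalkCount v g = c) :
    (n : ℤ) * (c + k * lam - c₁ ^ 2) ≥
      2 * ((c : ℤ) + k * lam + (k : ℤ) ^ g - 2 * c₁ * (k : ℤ) ^ (g / 2)) := by
  classical
  obtain ⟨hfin, hn, hdeg, hgirth, hlam⟩ := h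
  have := Fintype.ofFinite V
  have hreg : ∀ v, G.degree v = k := by
    intro v
    rw [← hdeg v, Set.ncard_eq_toFinset_card', ← card_neighborFinset_eq_degree]
    rfl
  have hnac : ¬ G.IsAcyclic := by
    rw [← egirth_eq_top, hgirth]
    exact ENat.natCast_ne_top g
  obtain ⟨v, -⟩ := exists_egirth_eq_length.2 hnac
  have col : G.Coloring Bool := hbip.toColoring (by simp)
  obtain ⟨m, rfl⟩ : ∃ m, g = 2 * (2 * m) := ⟨g / 4, by omega⟩
  rw [Nat.mul_div_cancel_left _ two_pos] at hc₁ ⊢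
  set P := Finset.univ.filter fun u => col u = col v with hP
  have hPcard : 2 * P.card = n := by
    rw [← hn, Nat.card_eq_fintype_card]
    exact two_mul_card_colorClass G k (by omega) hreg col (col v)
  have hvP : v ∈ P := by simp [hP]
  set M := G.adjMatrix ℤ ^ (2 * m) with hM
  have hMP : ∀ u, u ∉ P → M v u = 0 := by
    intro u hu
    rw [hM, adjMatrix_pow_apply_eq_card_walk]
    have : IsEmpty {p : G.Walk v u | p.length = 2 * m} := by
      refine ⟨fun ⟨p, hp⟩ => hu ?_⟩
      have hp' : p.length = 2 * m := hp
      have := (col.even_length_iff_congr p).1 (by rw [hp']; simp)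
      rw [hP, Finset.mem_filter]
      refine ⟨Finset.mem_univ _, ?_⟩
      rw [Bool.eq_iff_iff]
      exact this.symm
    simp
  have hdiag : M v v = c₁ := by
    rw [hM, adjMatrix_pow_apply_eq_card_walk, ← hc₁ v, closedWalkCount,
      Nat.card_eq_fintype_card]
    rfl
  have hrow : ∑ u ∈ P, M v u = (k : ℤ) ^ (2 * m) := by
    rw [← sum_adjMatrix_pow G k (2 * m) hreg v]
    exact Finset.sum_subset (Finset.subset_univ _) fun u _ hu => hMP u hu
  have hsymm : ∀ u, M u v = M v u := by
    intro u
    have : M.IsSymm := by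
      rw [hM]
      exact (G.isSymm_adjMatrix).pow _
    exact this.apply v u
  have hsq : ∑ u ∈ P, M v u ^ 2 = ((G.finsetWalkLength (2 * (2 * m)) v v).card : ℤ) := by
    rw [← card_set_walk_length_eq, ← adjMatrix_pow_apply_eq_card_walk (α := ℤ), two_mul, pow_add, ← hM,
      Matrix.mul_apply]
    simp only [hsymm, ← pow_two]
    exact Finset.sum_subset (Finset.subset_univ _) fun u _ hu => by simp [hMP u hu]
  have hX : (G.finsetWalkLength (2 * (2 * m)) v v).card ≤ c + k * lam := by
    have hcyc := card_cycles_le G v k (2 * (2 * m)) lam (hreg v) (hlam v)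
    have hfree : ((G.finsetWalkLength (2 * (2 * m)) v v).filter
        fun p => p.toSubgraph.coe.IsAcyclic).card = c := by
      rw [← hc v, cycleFreeClosedWalkCount]
      refine (Nat.subtype_card _ fun p => ?_).symm
      rw [Finset.mem_filter, mem_finsetWalkLength_iff]
    rw [← Finset.card_filter_add_card_filter_not (fun p => p.toSubgraph.coe.IsAcyclic), hfree]
    refine Nat.add_le_add_left (le_trans (Finset.card_le_card ?_) hcyc) c
    intro p hp
    rw [Finset.mem_filter, mem_finsetWalkLength_iff] at hp ⊢
    exact ⟨hp.1, isCycle_of_not_isAcyclic p (by rw [hgirth, hp.1]) hp.2⟩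
  -- Cauchy-Schwarz on the off-diagonal entries of the row of `v` inside its colour class.
  have hCS := sq_sum_le_card_mul_sum_sq (s := P.erase v) (f := fun u => M v u)
  rw [← Finset.add_sum_erase P _ hvP, hdiag] at hrow hsq
  have hcard : ((P.erase v).card : ℤ) + 1 = P.card := by
    exact_mod_cast Finset.card_erase_add_one hvP
  have hn' : (n : ℤ) = 2 * ((P.erase v).card + 1) := by
    rw [hcard, ← hPcard]
    push_cast
    ring
  have e1 : ∑ u ∈ P.erase v, M v u = (k : ℤ) ^ (2 * m) - c₁ := by linarith
  have e2 : ∑ u ∈ P.erase v, M v u ^ 2 ≤ (c : ℤ) + k * lam - c₁ ^ 2 := by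
    have : ((G.finsetWalkLength (2 * (2 * m)) v v).card : ℤ) ≤ c + k * lam := by
      exact_mod_cast hX
    linarith
  have e3 := hCS.trans (mul_le_mul_of_nonneg_left e2 (Int.natCast_nonneg _))
  rw [e1] at e3
  have e4 : (k : ℤ) ^ (2 * (2 * m)) = ((k : ℤ) ^ (2 * m)) ^ 2 := by
    rw [← pow_mul, mul_comm]
  rw [hn', e4]
  linarith
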